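/- The additive submonoid T of ℤ³ generated by H₂ = {(1,-2,1), (4,-1,-1), (2,-1,0), (-2,3,-1), (-1,-2,2), (-4,-3,4)} is pointed; that is, if u ∈ T and -u ∈ T then u = 0. -/

import Mathlib

/-!
The linear functional `u ↦ 4 * u 0 + 6 * u 1 + 9 * u 2` takes only the values `1` and `2` on `H₂`,
so it is positive at every nonzero element of `T`; it cannot be positive at both `u` and `-u`.
-/

/-- The additive submonoid `T` of `ℤ³` generated by `H₂`. -/
def T : AddSubmonoid (Fin 3 → ℤ) :=
  AddSubmonoid.closure
    {![1, -2, 1], ![4, -1, -1], ![2, -1, 0], ![-2, 3, -1], ![-1, -2, 2], ![-4, -3, 4]}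

section MapPos

variable {S : Type*} [AddZeroClass S] [Preorder S] [AddLeftStrictMono S]

theorem eq_zero_or_map_pos_of_mem_closure {M : Type*} [AddZeroClass M] {s : Set M} (f : M →+ S)
    (hf : ∀ x ∈ s, 0 < f x) {x : M} (hx : x ∈ AddSubmonoid.closure s) : x = 0 ∨ 0 < f x := by
  induction hx using AddSubmonoid.closure_induction with
  | mem x hx => exact Or.inr (hf x hx)
  | zero => exact Or.inl rfl
  | add x y _ _ ihx ihy =>
    rcases ihx with rfl | hx
    · rwa [zero_add]
    rcases ihy with rfl | hy
    · rw [add_zero]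
      exact Or.inr hx
    · rw [map_add]
      exact Or.inr (Left.add_pos hx hy)

theorem isPointed_closure_of_map_pos {G : Type*} [AddGroup G] {s : Set G} (f : G →+ S)
    (hf : ∀ x ∈ s, 0 < f x) : (AddSubmonoid.closure s).IsPointed := by
  intro x hx hnx
  by_contra hx₀
  have hpos : 0 < f x := (eq_zero_or_map_pos_of_mem_closure f hf hx).resolve_left hx₀
  have hneg_pos : 0 < f (-x) :=
    (eq_zero_or_map_pos_of_mem_closure f hf hnx).resolve_left (neg_ne_zero.mpr hx₀)
  have hsum : f x + f (-x) = 0 := by rw [← map_add, add_neg_cancel, map_zero]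
  exact (Left.add_pos hpos hneg_pos).ne' hsum

end MapPos

/-- The linear functional on `ℤ³` witnessing that `T` is pointed. Its coefficients are determined by
requiring the value `1` at `(1, -2, 1)`, `(4, -1, -1)` and `(-2, 3, -1)`. -/
def weight : (Fin 3 → ℤ) →+ ℤ :=
  (dotProductBilin ℤ ℤ ![4, 6, 9]).toAddMonoidHom

theorem weight_apply (u : Fin 3 → ℤ) : weight u = 4 * u 0 + 6 * u 1 + 9 * u 2 :=
  Matrix.vec3_dotProduct _ _

/-- The semigroup `T` is pointed: `u ∈ T` and `-u ∈ T` imply `u = 0`. -/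
theorem T_pointed : ∀ u ∈ T, -u ∈ T → u = 0 := by
  refine isPointed_closure_of_map_pos weight ?_
  rintro _ (rfl | rfl | rfl | rfl | rfl | rfl) <;> simp [weight_apply]
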